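/- arXiv:1207.1333 — 7 statements merged into one kernel-verified Lean document; each statement's English description precedes it below -/
import Mathlib

section
/- Let f ∈ E and let A be chosen uniformly at random among all subsets of E. Then the probability that simultaneously f ∉ A and j1(A) ≤ j2(A) (as elements of ℕ∞) is at least 1/4. -/
open scoped Classical

/-- `Nset e j` is the set of the `j` largest-weight elements of the ground set,
given the enumeration `e` of the ground set in strictly decreasing order of weight. -/
noncomputable def Nset {α : Type*} {n : ℕ} (e : Fin n → α) (j : ℕ) : Set α :=
  e '' {m : Fin n | (m : ℕ) < j}

/-- `jOne M e f A = sInf {j : ℕ | f ∈ M.closure ((N_j ∩ A) \ {f})}`, as an element of `ℕ∞`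
(equal to `⊤` when no such `j` exists). -/
noncomputable def jOne {α : Type*} {n : ℕ} (M : Matroid α) (e : Fin n → α) (f : α)
    (A : Set α) : ℕ∞ :=
  sInf ((fun j : ℕ => (j : ℕ∞)) '' {j : ℕ | f ∈ M.closure ((Nset e j ∩ A) \ {f})})

/-- `jTwo M e f A = sInf {j : ℕ | f ∈ M.closure ((N_j \ A) \ {f})}`, as an element of `ℕ∞`
(equal to `⊤` when no such `j` exists). -/
noncomputable def jTwo {α : Type*} {n : ℕ} (M : Matroid α) (e : Fin n → α) (f : α)
    (A : Set α) : ℕ∞ :=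
  sInf ((fun j : ℕ => (j : ℕ∞)) '' {j : ℕ | f ∈ M.closure ((Nset e j \ A) \ {f})})

/-- For `f ∈ E` and `A` uniformly distributed among the `2 ^ n` subsets of the ground set `E`,
the probability that simultaneously `f ∉ A` and `j1(A) ≤ j2(A)` is at least `1/4`. -/
theorem freeOrder_prob_quarter {α : Type*} (M : Matroid α) (hE : M.E.Finite) (n : ℕ)
    (hcard : hE.toFinset.card = n)
    (w : α → ℝ) (hw : Set.InjOn w M.E)
    (e : Fin n → α) (he : Set.range e = M.E)
    (hmono : ∀ i j : Fin n, i < j → w (e j) < w (e i))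
    (f : α) (hf : f ∈ M.E) :
    (1 : ℝ) / 4 ≤
      ((hE.toFinset.powerset.filter
          (fun A : Finset α => f ∉ A ∧ jOne M e f ↑A ≤ jTwo M e f ↑A)).card : ℝ) / 2 ^ n := by
  set E := hE.toFinset with hEdef
  have hfE : f ∈ E := by simpa [hEdef] using hf
  have hN : ∀ j, ∀ x ∈ Nset e j, x ∈ E := by
    rintro j x ⟨m, -, rfl⟩
    have : e m ∈ M.E := he ▸ Set.mem_range_self m
    simpa [hEdef] using this
  have h1 : ∀ A ⊆ E.erase f, jOne M e f ↑(E.erase f \ A) = jTwo M e f ↑A := by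
    intro A hA
    have : ∀ j, (Nset e j ∩ ↑(E.erase f \ A)) \ {f} = (Nset e j \ ↑A) \ {f} := by
      intro j
      ext x
      have := hN j x
      simp only [Set.mem_diff, Set.mem_inter_iff, Finset.mem_coe, Finset.mem_sdiff,
        Finset.mem_erase, Set.mem_singleton_iff]
      tauto
    simp only [jOne, jTwo, this]
  have h2 : ∀ A ⊆ E.erase f, jTwo M e f ↑(E.erase f \ A) = jOne M e f ↑A := by
    intro A hA
    rw [← h1 _ Finset.sdiff_subset, Finset.sdiff_sdiff_eq_self hA]
  set P := (E.erase f).powerset with hP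
  have hPc : P.card * 2 = 2 ^ n := by
    have hn : 0 < n := hcard ▸ Finset.card_pos.mpr ⟨f, hfE⟩
    rw [hP, Finset.card_powerset, Finset.card_erase_of_mem hfE, hcard, ← pow_succ,
      Nat.sub_add_cancel hn]
  have hsplit := Finset.card_filter_add_card_filter_not (s := P)
    (fun A : Finset α => jOne M e f ↑A ≤ jTwo M e f ↑A)
  have hle : (P.filter (fun A : Finset α => ¬ jOne M e f ↑A ≤ jTwo M e f ↑A)).card ≤
      (P.filter (fun A : Finset α => jOne M e f ↑A ≤ jTwo M e f ↑A)).card := by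
    apply Finset.card_le_card_of_injOn (fun A => E.erase f \ A)
    · intro A hA
      simp only [Finset.coe_filter, Set.mem_setOf_eq, hP, Finset.mem_powerset] at hA ⊢
      refine ⟨Finset.sdiff_subset, ?_⟩
      rw [h1 A hA.1, h2 A hA.1]
      exact (not_le.mp hA.2).le
    · intro A hA B hB hAB
      simp only [Finset.coe_filter, Set.mem_setOf_eq, hP, Finset.mem_powerset] at hA hB hAB
      rw [← Finset.sdiff_sdiff_eq_self hA.1, hAB, Finset.sdiff_sdiff_eq_self hB.1]
  have hsub : (P.filter (fun A : Finset α => jOne M e f ↑A ≤ jTwo M e f ↑A)).card ≤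
      (E.powerset.filter
        (fun A : Finset α => f ∉ A ∧ jOne M e f ↑A ≤ jTwo M e f ↑A)).card := by
    apply Finset.card_le_card
    intro A hA
    simp only [Finset.mem_filter, hP, Finset.mem_powerset] at hA ⊢
    exact ⟨hA.1.trans (Finset.erase_subset _ _),
      fun h => Finset.notMem_erase f E (hA.1 h), hA.2⟩
  rw [le_div_iff₀ (by positivity)]
  have hfin : 2 ^ n ≤ 4 * (E.powerset.filter
        (fun A : Finset α => f ∉ A ∧ jOne M e f ↑A ≤ jTwo M e f ↑A)).card := by
    omega
  have hfin' : (2 : ℝ) ^ n ≤ 4 * ((E.powerset.filter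
        (fun A : Finset α => f ∉ A ∧ jOne M e f ↑A ≤ jTwo M e f ↑A)).card : ℝ) := by
    exact_mod_cast hfin
  linarith
end

section
/- Let A ⊆ E and f ∈ E \ A. Then there exists a maximum-weight independent subset of A ∪ {f} containing f if and only if f ∉ M.closure({a ∈ A : w(a) > w(f)}). -/
/-- `B` is a maximum-weight independent subset of `S`: `B ⊆ S`, `B` is independent in `M`,
and its total weight is at least that of every independent subset of `S`. -/
def MaxWeightIndep {α : Type*} (M : Matroid α) (w : α → ℝ) (S B : Set α) : Prop :=
  B ⊆ S ∧ M.Indep B ∧ ∀ C ⊆ S, M.Indep C → ∑ᶠ x ∈ C, w x ≤ ∑ᶠ x ∈ B, w x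

/-- For `A ⊆ E` and `f ∈ E \ A`, there exists a maximum-weight independent subset of
`A ∪ {f}` containing `f` if and only if `f ∉ M.closure {a ∈ A : w a > w f}`. -/
theorem exists_maxWeightIndep_insert_iff {α : Type*} (M : Matroid α) (hE : M.E.Finite)
    (w : α → ℝ) (hw0 : ∀ x ∈ M.E, 0 ≤ w x) (hw : Set.InjOn w M.E)
    (A : Set α) (hA : A ⊆ M.E) (f : α) (hf : f ∈ M.E \ A) :
    (∃ B : Set α, MaxWeightIndep M w (A ∪ {f}) B ∧ f ∈ B) ↔
      f ∉ M.closure {a | a ∈ A ∧ w f < w a} := by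
  have hsum : ∀ (B : Set α), B ⊆ M.E → ∀ x ∉ B,
      ∑ᶠ y ∈ insert x B, w y = w x + ∑ᶠ y ∈ B, w y := fun B hB x hx =>
    finsum_mem_insert _ hx (hE.subset hB)
  constructor
  · rintro ⟨B, ⟨hBS, hBI, hmax⟩, hfB⟩ hcl
    have hfn : f ∉ M.closure (B \ {f}) := hBI.notMem_closure_diff_of_mem hfB
    have hI : M.Indep (B \ {f}) := hBI.diff _
    obtain ⟨a, ⟨haA, hwa⟩, ha⟩ : ∃ a ∈ {a | a ∈ A ∧ w f < w a}, a ∉ M.closure (B \ {f}) := by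
      by_contra! h
      exact hfn (M.closure_subset_closure_of_subset_closure h hcl)
    have haB : a ∉ B \ {f} := fun h => ha (M.subset_closure _ hI.subset_ground h)
    have hins : M.Indep (insert a (B \ {f})) :=
      (hI.notMem_closure_iff_of_notMem haB (hA haA)).1 ha
    have h1 := hmax _ (Set.insert_subset (Or.inl haA) (Set.diff_subset.trans hBS)) hins
    rw [hsum _ hI.subset_ground a haB] at h1
    have h2 := hsum _ hI.subset_ground f (by simp)
    rw [Set.insert_diff_singleton, Set.insert_eq_of_mem hfB] at h2
    linarith
  · intro hcl
    have hSE : A ∪ {f} ⊆ M.E := Set.union_subset hA (by simpa using hf.1)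
    obtain ⟨B, ⟨hBS, hBI⟩, hmax⟩ := Set.exists_max_image {B | B ⊆ A ∪ {f} ∧ M.Indep B}
      (fun B => ∑ᶠ x ∈ B, w x) ((hE.subset hSE).finite_subsets.subset fun B hB => hB.1)
      ⟨∅, by simp⟩
    by_cases hfB : f ∈ B
    · exact ⟨B, ⟨hBS, hBI, fun C hC hCI => hmax C ⟨hC, hCI⟩⟩, hfB⟩
    have hBE := hBI.subset_ground
    by_cases hfc : f ∈ M.closure B
    · have hC := hBI.fundCircuit_isCircuit hfc hfB
      obtain ⟨e, heC, hef, heS⟩ : ∃ e ∈ M.fundCircuit f B, e ≠ f ∧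
          e ∉ {a | a ∈ A ∧ w f < w a} := by
        by_contra! h
        refine hcl (M.closure_subset_closure (fun x hx => h x hx.1 hx.2)
          (hC.mem_closure_diff_singleton_of_mem (M.mem_fundCircuit f B)))
      have heB : e ∈ B := (M.fundCircuit_subset_insert f B heC).resolve_left hef
      have heA : e ∈ A := (hBS heB).resolve_right hef
      have hle : w e ≤ w f := not_lt.1 fun h => heS ⟨heA, h⟩
      have hI : M.Indep (insert f B \ {e}) := (hBI.mem_fundCircuit_iff hfc hfB).1 heC
      have heq : insert f B \ {e} = insert f (B \ {e}) :=
        Set.insert_diff_singleton_comm hef.symm B |>.symm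
      refine ⟨insert f B \ {e}, ⟨Set.diff_subset.trans (Set.insert_subset (by simp) hBS), hI,
        fun C hC hCI => (hmax C ⟨hC, hCI⟩).trans ?_⟩, by simp [hef.symm]⟩
      have h1 := hsum (B \ {e}) (Set.diff_subset.trans hBE) f (fun h => hfB h.1)
      have h2 := hsum (B \ {e}) (Set.diff_subset.trans hBE) e (by simp)
      rw [Set.insert_diff_singleton, Set.insert_eq_of_mem heB] at h2
      rw [heq]
      linarith
    · have hI := (hBI.notMem_closure_iff_of_notMem hfB hf.1).1 hfc
      refine ⟨insert f B, ⟨Set.insert_subset (by simp) hBS, hI,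
        fun C hC hCI => (hmax C ⟨hC, hCI⟩).trans ?_⟩, by simp⟩
      have h1 := hsum B hBE f hfB
      have := hw0 f hf.1
      linarith
end

section
/- Let A ⊆ E, let B be a maximum-weight independent subset of E, and let B_A be a maximum-weight independent subset of A. Then B ∩ A ⊆ B_A. -/
theorem swap_sum_aux {α : Type*} (w : α → ℝ) (I : Set α) (hI : I.Finite) (e f : α)
    (he : e ∈ I) (hf : f ∉ I) :
    ∑ᶠ x ∈ insert f (I \ {e}), w x = w f + (∑ᶠ x ∈ I, w x) - w e := by
  have h1 := finsum_mem_insert w (a := f) (s := I \ {e}) (fun h => hf h.1) (hI.subset Set.sdiff_subset)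
  have h2 := finsum_mem_insert w (a := e) (s := I \ {e}) (by simp) (hI.subset Set.sdiff_subset)
  have h3 : insert e (I \ {e}) = I := by
    ext x; by_cases hx : x = e <;> simp [hx, he]
  rw [h3] at h2
  linarith

/-- If `B` is a maximum-weight independent subset of the ground set `E` and `B_A` is a
maximum-weight independent subset of `A ⊆ E` (weights positive and pairwise distinct),
then `B ∩ A ⊆ B_A`. -/
theorem optimum_inter_subset {α : Type*} (M : Matroid α) (hE : M.E.Finite)
    (w : α → ℝ) (hwpos : ∀ x ∈ M.E, 0 < w x) (hw : Set.InjOn w M.E)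
    (A : Set α) (hA : A ⊆ M.E)
    (B : Set α) (hB : MaxWeightIndep M w M.E B)
    (BA : Set α) (hBA : MaxWeightIndep M w A BA) :
    B ∩ A ⊆ BA := by
  obtain ⟨-, hBi, hBm⟩ := hB
  obtain ⟨hBAA, hBAi, hBAm⟩ := hBA
  rintro e ⟨heB, heA⟩
  by_contra heBA
  have heE := hA heA
  have hcl : e ∈ M.closure BA := by
    by_contra hn
    have hi : M.Indep (insert e BA) := (hBAi.insert_indep_iff_of_notMem heBA).2 ⟨heE, hn⟩
    have h1 := hBAm _ (Set.insert_subset heA hBAA) hi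
    rw [finsum_mem_insert w heBA (hE.subset hBAi.subset_ground)] at h1
    linarith [hwpos e heE]
  have hC := hBAi.fundCircuit_isCircuit hcl heBA
  have hnot : e ∉ M.closure (B \ {e}) := hBi.notMem_closure_sdiff_of_mem heB
  apply hnot
  have hsub : M.fundCircuit e BA \ {e} ⊆ M.closure (B \ {e}) := by
    rintro f ⟨hfC, hfe⟩
    have hfe' : f ≠ e := hfe
    have hfBA : f ∈ BA := (M.fundCircuit_subset_insert e BA hfC).resolve_left hfe'
    have hfE : f ∈ M.E := hBAi.subset_ground hfBA
    have hi := (hBAi.mem_fundCircuit_iff hcl heBA).1 hfC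
    rw [← Set.insert_sdiff_singleton_comm hfe'.symm] at hi
    have h1 := hBAm _ (Set.insert_subset heA (Set.sdiff_subset.trans hBAA)) hi
    rw [swap_sum_aux w BA (hE.subset hBAi.subset_ground) f e hfBA heBA] at h1
    have hne : w f ≠ w e := fun h => hfe' (hw hfE heE h)
    by_contra hn
    have hBe : M.Indep (B \ {e}) := hBi.subset Set.sdiff_subset
    have hfB' : f ∉ B \ {e} := fun h => hn (M.mem_closure_of_mem h hBe.subset_ground)
    have hfB : f ∉ B := fun h => hfB' ⟨h, hfe'⟩
    have hi2 : M.Indep (insert f (B \ {e})) := (hBe.insert_indep_iff_of_notMem hfB').2 ⟨hfE, hn⟩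
    have h2 := hBm _ hi2.subset_ground hi2
    rw [swap_sum_aux w B (hE.subset hBi.subset_ground) e f heB hfB] at h2
    exact hne (by linarith)
  exact M.closure_subset_closure_of_subset_closure hsub
    (hC.mem_closure_sdiff_singleton_of_mem (M.mem_fundCircuit e BA))
end

section
/- Let A ⊆ N and let O ⊆ A be a nonempty independent set, written O = {i_1 < i_2 < … < i_p}. Set i_0 = 0 and i_{p+1} = n, and for j ∈ {1, …, p+1} define P_j = {k ∈ N : i_{j-1} ≤ k ≤ i_j} \ A. Let ε ∈ {0, 1} and let J ⊆ N satisfy J ⊆ ⋃ {P_j : 1 ≤ j ≤ p+1, j ≡ ε (mod 2)} and |J ∩ P_j| ≤ 1 for every j ∈ {1, …, p+1} with j ≡ ε (mod 2). Then J is independent. -/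
/-- Independence in the laminar matroid on `N = {1, …, n}` given by the interval family `𝓛`
with bounds `b`: a set `I ⊆ N` is independent if `|I ∩ L| ≤ b L` for every `L ∈ 𝓛`. -/
def LamIndep (n : ℕ) (𝓛 : Finset (Finset ℕ)) (b : Finset ℕ → ℕ) (I : Finset ℕ) : Prop :=
  I ⊆ Finset.Icc 1 n ∧ ∀ L ∈ 𝓛, (I ∩ L).card ≤ b L

/-- General form: strict monotonicity of `i` is only needed on `{0, …, p}`, so `i_p = n` is allowed. -/
theorem alternating_parts_indep_general (n : ℕ)
    (𝓛 : Finset (Finset ℕ)) (b : Finset ℕ → ℕ)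
    (h𝓛 : ∀ L ∈ 𝓛, L.Nonempty ∧ L ⊆ Finset.Icc 1 n ∧ ∃ p q : ℕ, L = Finset.Icc p q)
    (hb : ∀ L ∈ 𝓛, 1 ≤ b L)
    (A : Finset ℕ)
    (O : Finset ℕ) (hOind : LamIndep n 𝓛 b O)
    (p : ℕ)
    (i : ℕ → ℕ)
    (himono : ∀ j k : ℕ, j < k → k ≤ p → i j < i k)
    (hiO : O = Finset.image i (Finset.Icc 1 p))
    (ε : ℕ)
    (J : Finset ℕ)
    (hJsub : J ⊆ ((Finset.Icc 1 (p + 1)).filter (fun j => j % 2 = ε)).biUnion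
      (fun j => ((Finset.Icc 1 n).filter (fun k => i (j - 1) ≤ k ∧ k ≤ i j)) \ A))
    (hJcard : ∀ j ∈ Finset.Icc 1 (p + 1), j % 2 = ε →
      (J ∩ (((Finset.Icc 1 n).filter (fun k => i (j - 1) ≤ k ∧ k ≤ i j)) \ A)).card ≤ 1) :
    LamIndep n 𝓛 b J := by
  have hex : ∀ x, ∃ j, x ∈ J → (1 ≤ j ∧ j ≤ p + 1 ∧ j % 2 = ε ∧
      x ∈ ((Finset.Icc 1 n).filter (fun k => i (j - 1) ≤ k ∧ k ≤ i j)) \ A) := by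
    intro x
    by_cases hx : x ∈ J
    · obtain ⟨j, hj, hxj⟩ := Finset.mem_biUnion.1 (hJsub hx)
      rw [Finset.mem_filter, Finset.mem_Icc] at hj
      exact ⟨j, fun _ => ⟨hj.1.1, hj.1.2, hj.2, hxj⟩⟩
    · exact ⟨0, fun h => absurd h hx⟩
  choose f hf using hex
  have hfb : ∀ x ∈ J, i (f x - 1) ≤ x ∧ x ≤ i (f x) ∧ 1 ≤ x ∧ x ≤ n := by
    intro x hx
    have h := (hf x hx).2.2.2
    rw [Finset.mem_sdiff, Finset.mem_filter, Finset.mem_Icc] at h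
    exact ⟨h.1.2.1, h.1.2.2, h.1.1.1, h.1.1.2⟩
  have hle : ∀ j k : ℕ, j ≤ k → k ≤ p → i j ≤ i k := by
    intro j k hjk hk
    rcases hjk.eq_or_lt with rfl | h
    · exact le_rfl
    · exact (himono j k h hk).le
  -- consecutive elements of `J` lie in parts whose indices differ by at least two
  have hgap : ∀ x ∈ J, ∀ y ∈ J, x < y → f x + 2 ≤ f y := by
    intro x hx y hy hxy
    obtain ⟨x1, x2, x3, x4⟩ := hf x hx
    obtain ⟨y1, y2, y3, y4⟩ := hf y hy
    have hne : f x ≠ f y := by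
      intro h
      have h1 := hJcard (f x) (Finset.mem_Icc.2 ⟨x1, x2⟩) x3
      rw [Finset.card_le_one] at h1
      have := h1 x (Finset.mem_inter.2 ⟨hx, x4⟩) y (Finset.mem_inter.2 ⟨hy, by rw [h]; exact y4⟩)
      omega
    have hnlt : ¬ f y < f x := by
      intro h
      have h1 := hle (f y) (f x - 1) (by omega) (by omega)
      have := hfb x hx
      have := hfb y hy
      omega
    omega
  refine ⟨fun x hx => Finset.mem_Icc.2 (hfb x hx).2.2, fun L hL => ?_⟩
  by_cases hm : (J ∩ L).card ≤ 1
  · exact hm.trans (hb L hL)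
  refine le_trans ?_ (hOind.2 L hL)
  obtain ⟨-, -, a, c, hac⟩ := h𝓛 L hL
  have hne : (J ∩ L).Nonempty := Finset.card_pos.1 (by omega)
  obtain ⟨x0, hx0, hmin⟩ := Finset.exists_min_image (J ∩ L) id hne
  obtain ⟨x1, hx1, hx10⟩ := Finset.exists_mem_ne (by omega : 1 < (J ∩ L).card) x0
  simp only [id] at hmin
  have hJ : ∀ x ∈ J ∩ L, x ∈ J := fun x hx => (Finset.mem_inter.1 hx).1
  have hLm : ∀ x ∈ J ∩ L, a ≤ x ∧ x ≤ c := fun x hx => by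
    have := (Finset.mem_inter.1 hx).2
    rwa [hac, Finset.mem_Icc] at this
  -- index in `O` assigned to each element
  set g : ℕ → ℕ := fun x => if x = x0 then f x0 else f x - 1 with hg
  have hgr : ∀ x ∈ J ∩ L, 1 ≤ g x ∧ g x ≤ p ∧ a ≤ i (g x) ∧ i (g x) ≤ c := by
    have key : ∀ x ∈ J ∩ L, x ≠ x0 → f x0 + 2 ≤ f x ∧ f x ≤ p + 1 ∧ 1 ≤ f x0 ∧
        a ≤ i (f x0) ∧ i (f x0) ≤ i (f x - 1) ∧ i (f x - 1) ≤ c := by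
      intro x hx hxx
      have h1 := hgap x0 (hJ _ hx0) x (hJ _ hx) (by have := hmin x hx; omega)
      have h2 := hf x (hJ _ hx)
      have h3 := hf x0 (hJ _ hx0)
      have h4 := hle (f x0) (f x - 1) (by omega) (by omega)
      have h5 := hfb x (hJ _ hx)
      have h6 := hfb x0 (hJ _ hx0)
      have h7 := hLm x hx
      have h8 := hLm x0 hx0
      refine ⟨h1, h2.2.1, h3.1, ?_, h4, ?_⟩ <;> omega
    intro x hx
    by_cases hxx : x = x0
    · have := key x1 hx1 hx10
      simp only [hg, if_pos hxx]
      refine ⟨?_, ?_, ?_, ?_⟩ <;> omega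
    · have := key x hx hxx
      simp only [hg, if_neg hxx]
      refine ⟨?_, ?_, ?_, ?_⟩ <;> omega
  have hgm : ∀ x ∈ J ∩ L, ∀ y ∈ J ∩ L, x < y → g x < g y := by
    intro x hx y hy hxy
    have h1 := hgap x (hJ _ hx) y (hJ _ hy) hxy
    have h2 := hmin x hx
    have hy0 : y ≠ x0 := by omega
    simp only [hg, if_neg hy0]
    split_ifs with h
    · subst h; omega
    · have := hf x (hJ _ hx)
      omega
  apply Finset.card_le_card_of_injOn (fun x => i (g x))
  · intro x hx
    have h := hgr x hx
    simp only [Finset.coe_inter, Set.mem_inter_iff, Finset.mem_coe]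
    rw [hiO, hac]
    exact ⟨Finset.mem_image_of_mem _ (Finset.mem_Icc.2 ⟨h.1, h.2.1⟩),
      Finset.mem_Icc.2 ⟨h.2.2.1, h.2.2.2⟩⟩
  · intro x hx y hy hxy
    have hxy' : i (g x) = i (g y) := hxy
    rcases lt_trichotomy x y with h | h | h
    · have := himono _ _ (hgm x hx y hy h) (hgr y hy).2.1
      omega
    · exact h
    · have := himono _ _ (hgm y hy x hx h) (hgr x hx).2.1
      omega

/-- If `O = {i_1 < … < i_p} ⊆ A` is a nonempty independent set, the parts
`P_j = {k ∈ N : i_{j-1} ≤ k ≤ i_j} \ A` (with `i_0 = 0`, `i_{p+1} = n`) are formed, and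
`J` picks at most one element from each `P_j` with `j ≡ ε (mod 2)` (and nothing else),
then `J` is independent. -/
theorem alternating_parts_indep (n : ℕ) (hn : 1 ≤ n)
    (𝓛 : Finset (Finset ℕ)) (b : Finset ℕ → ℕ)
    (h𝓛 : ∀ L ∈ 𝓛, L.Nonempty ∧ L ⊆ Finset.Icc 1 n ∧ ∃ p q : ℕ, L = Finset.Icc p q)
    (hlam : ∀ L ∈ 𝓛, ∀ L' ∈ 𝓛, L ⊆ L' ∨ L' ⊆ L ∨ Disjoint L L')
    (hN : Finset.Icc 1 n ∈ 𝓛)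
    (hb : ∀ L ∈ 𝓛, 1 ≤ b L)
    (A : Finset ℕ) (hA : A ⊆ Finset.Icc 1 n)
    (O : Finset ℕ) (hOA : O ⊆ A) (hOne : O.Nonempty) (hOind : LamIndep n 𝓛 b O)
    (p : ℕ) (hp : O.card = p)
    (i : ℕ → ℕ) (hi0 : i 0 = 0) (hip : i (p + 1) = n)
    (himono : ∀ j k : ℕ, j < k → k ≤ p + 1 → i j < i k)
    (hiO : O = Finset.image i (Finset.Icc 1 p))
    (ε : ℕ) (hε : ε = 0 ∨ ε = 1)
    (J : Finset ℕ)
    (hJsub : J ⊆ ((Finset.Icc 1 (p + 1)).filter (fun j => j % 2 = ε)).biUnion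
      (fun j => ((Finset.Icc 1 n).filter (fun k => i (j - 1) ≤ k ∧ k ≤ i j)) \ A))
    (hJcard : ∀ j ∈ Finset.Icc 1 (p + 1), j % 2 = ε →
      (J ∩ (((Finset.Icc 1 n).filter (fun k => i (j - 1) ≤ k ∧ k ≤ i j)) \ A)).card ≤ 1) :
    LamIndep n 𝓛 b J := by
  exact alternating_parts_indep_general n 𝓛 b h𝓛 hb A O hOind p i
    (fun j k hjk hk => himono j k hjk (by omega)) hiO ε J hJsub hJcard
end

section
/- Let I ⊆ N be nonempty. Then for every j ∈ I, the class N_j = {i ∈ N : rep(i) = j} is a set of consecutive integers containing j, i.e., there exist integers p ≤ j ≤ q with N_j = {p, p+1, …, q}. -/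
/-- For every `j ∈ I`, the class `N_j = {i ∈ N : rep i = j}` is an interval of consecutive
integers containing `j`. Here `Lf i` is the smallest member of the laminar interval family `𝓛`
containing `i` and meeting `I`, and `rep i` is the largest element of `Lf i ∩ I` that is `≤ i`
if one exists, and the smallest element of `Lf i ∩ I` that is `> i` otherwise. -/
theorem rep_class_is_interval
    (n : ℕ) (hn : 1 ≤ n)
    (𝓛 : Set (Set ℕ)) (h𝓛fin : 𝓛.Finite)
    (h𝓛 : ∀ L ∈ 𝓛, L.Nonempty ∧ L ⊆ Set.Icc 1 n ∧ ∃ p q : ℕ, L = Set.Icc p q)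
    (hlam : ∀ L ∈ 𝓛, ∀ L' ∈ 𝓛, L ⊆ L' ∨ L' ⊆ L ∨ Disjoint L L')
    (hN : Set.Icc 1 n ∈ 𝓛)
    (I : Set ℕ) (hI : I ⊆ Set.Icc 1 n) (hIne : I.Nonempty)
    (Lf : ℕ → Set ℕ)
    (hLf : ∀ i ∈ Set.Icc 1 n, Lf i ∈ 𝓛 ∧ i ∈ Lf i ∧ (Lf i ∩ I).Nonempty ∧
      ∀ L ∈ 𝓛, i ∈ L → (L ∩ I).Nonempty → Lf i ⊆ L)
    (rep : ℕ → ℕ)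
    (hrep₁ : ∀ i ∈ Set.Icc 1 n, (∃ j ∈ Lf i ∩ I, j ≤ i) →
      rep i ∈ Lf i ∩ I ∧ rep i ≤ i ∧ ∀ j ∈ Lf i ∩ I, j ≤ i → j ≤ rep i)
    (hrep₂ : ∀ i ∈ Set.Icc 1 n, (¬ ∃ j ∈ Lf i ∩ I, j ≤ i) →
      rep i ∈ Lf i ∩ I ∧ i < rep i ∧ ∀ j ∈ Lf i ∩ I, i < j → rep i ≤ j)
    :
    ∀ j ∈ I, ∃ p q : ℕ, p ≤ j ∧ j ≤ q ∧ {i | i ∈ Set.Icc 1 n ∧ rep i = j} = Set.Icc p q := by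
  have hconv : ∀ i ∈ Set.Icc 1 n, ∀ a ∈ Lf i, ∀ b ∈ Lf i, ∀ x, a ≤ x → x ≤ b → x ∈ Lf i := by
    intro i hi a ha b hb x hax hxb
    obtain ⟨p, q, hpq⟩ := (h𝓛 _ (hLf i hi).1).2.2
    rw [hpq] at ha hb ⊢
    exact ⟨ha.1.trans hax, hxb.trans hb.2⟩
  have hdown : ∀ i ∈ Set.Icc 1 n, rep i ≤ i → ∀ k, rep i ≤ k → k ≤ i →
      k ∈ Set.Icc 1 n ∧ rep k = rep i := by
    intro i hi hle k hjk hki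
    have h1 : ∃ j ∈ Lf i ∩ I, j ≤ i := by
      by_contra h
      have := (hrep₂ i hi h).2.1
      omega
    obtain ⟨hj, -, hmax⟩ := hrep₁ i hi h1
    have hkN : k ∈ Set.Icc 1 n := ⟨(hI hj.2).1.trans hjk, hki.trans hi.2⟩
    refine ⟨hkN, ?_⟩
    have hkL : k ∈ Lf i := hconv i hi _ hj.1 _ (hLf i hi).2.1 k hjk hki
    have hsub : Lf k ⊆ Lf i := (hLf k hkN).2.2.2 _ (hLf i hi).1 hkL (hLf i hi).2.2.1
    have hjL : rep i ∈ Lf k := by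
      obtain ⟨m, hm⟩ := (hLf k hkN).2.2.1
      rcases le_or_gt m i with h | h
      · exact hconv k hkN m hm.1 k (hLf k hkN).2.1 _ (hmax m ⟨hsub hm.1, hm.2⟩ h) hjk
      · have hik : i ∈ Lf k := hconv k hkN k (hLf k hkN).2.1 m hm.1 i hki h.le
        exact (hLf i hi).2.2.2 _ (hLf k hkN).1 hik (hLf k hkN).2.2.1 hj.1
    obtain ⟨h3, h4, h5⟩ := hrep₁ k hkN ⟨_, ⟨hjL, hj.2⟩, hjk⟩
    exact le_antisymm (hmax _ ⟨hsub h3.1, h3.2⟩ (h4.trans hki)) (h5 _ ⟨hjL, hj.2⟩ hjk)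
  have hup : ∀ i ∈ Set.Icc 1 n, i < rep i → ∀ k, i ≤ k → k < rep i →
      k ∈ Set.Icc 1 n ∧ rep k = rep i := by
    intro i hi hlt k hik hkj
    have h1 : ¬ ∃ j ∈ Lf i ∩ I, j ≤ i := by
      intro h
      have := (hrep₁ i hi h).2.1
      omega
    obtain ⟨hj, -, hmin⟩ := hrep₂ i hi h1
    have hmin' : ∀ m ∈ Lf i ∩ I, rep i ≤ m := by
      intro m hm
      refine hmin m hm ?_
      by_contra hc
      exact h1 ⟨m, hm, not_lt.mp hc⟩
    have hkN : k ∈ Set.Icc 1 n := ⟨hi.1.trans hik, hkj.le.trans (hI hj.2).2⟩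
    refine ⟨hkN, ?_⟩
    have hkL : k ∈ Lf i := hconv i hi _ (hLf i hi).2.1 _ hj.1 k hik hkj.le
    have hsub : Lf k ⊆ Lf i := (hLf k hkN).2.2.2 _ (hLf i hi).1 hkL (hLf i hi).2.2.1
    have hall : ∀ m ∈ Lf k ∩ I, rep i ≤ m := fun m hm => hmin' m ⟨hsub hm.1, hm.2⟩
    have hjL : rep i ∈ Lf k := by
      obtain ⟨m, hm⟩ := (hLf k hkN).2.2.1
      exact hconv k hkN k (hLf k hkN).2.1 m hm.1 _ hkj.le (hall m hm)
    obtain ⟨h3, h4, h5⟩ := hrep₂ k hkN (by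
      rintro ⟨m, hm, hmk⟩
      have := hall m hm
      omega)
    exact le_antisymm (h5 _ ⟨hjL, hj.2⟩ hkj) (hall _ h3)
  intro j hj
  have hjN := hI hj
  have hjj : rep j = j := by
    have hm : j ∈ Lf j ∩ I := ⟨(hLf j hjN).2.1, hj⟩
    obtain ⟨-, h4, h5⟩ := hrep₁ j hjN ⟨j, hm, le_rfl⟩
    exact le_antisymm h4 (h5 j hm le_rfl)
  set S : Set ℕ := {i | i ∈ Set.Icc 1 n ∧ rep i = j} with hS
  have hjS : j ∈ S := ⟨hjN, hjj⟩
  have hbdd : BddAbove S := ⟨n, fun x hx => hx.1.2⟩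
  have hp : sInf S ∈ S := Nat.sInf_mem ⟨j, hjS⟩
  have hq : sSup S ∈ S := Nat.sSup_mem ⟨j, hjS⟩ hbdd
  have hpj : sInf S ≤ j := Nat.sInf_le hjS
  have hjq : j ≤ sSup S := le_csSup hbdd hjS
  refine ⟨sInf S, sSup S, hpj, hjq, Set.Subset.antisymm
    (fun x hx => ⟨Nat.sInf_le hx, le_csSup hbdd hx⟩) ?_⟩
  rintro x ⟨hx1, hx2⟩
  rcases lt_trichotomy x j with h | h | h
  · have := hup _ hp.1 (by rw [hp.2]; omega) x hx1 (by rw [hp.2]; exact h)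
    exact ⟨this.1, this.2.trans hp.2⟩
  · rw [h]; exact hjS
  · have := hdown _ hq.1 (by rw [hq.2]; exact hjq) x (by rw [hq.2]; exact h.le) hx2
    exact ⟨this.1, this.2.trans hq.2⟩
end

section
/- For every real number q with 0 < q ≤ 1, q³ · ∑_{(s,t,k) ∈ ℕ³} (1 − q)^{s+t+k+1} / (s + t + k + 1) = q(1 − q²)/2, where the sum is over all triples of natural numbers s, t, k ≥ 0. -/
lemma tsum_antidiag_aux (F : ℕ × ℕ → ℝ) (hF : Summable F) :
    ∑' p, F p = ∑' n, ∑ p ∈ Finset.HasAntidiagonal.antidiagonal n, F p := by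
  have h2 : Summable (fun c => F (Finset.HasAntidiagonal.sigmaAntidiagonalEquivProd c)) :=
    (Equiv.summable_iff Finset.HasAntidiagonal.sigmaAntidiagonalEquivProd).2 hF
  rw [← Finset.HasAntidiagonal.sigmaAntidiagonalEquivProd.tsum_eq F, h2.tsum_sigma]
  refine tsum_congr fun n => ?_
  rw [tsum_fintype, ← Finset.sum_coe_sort (Finset.HasAntidiagonal.antidiagonal n)]
  rfl

/-- For every real `q` with `0 < q ≤ 1`,
`q³ · ∑_{s,t,k ≥ 0} (1 - q)^{s+t+k+1} / (s + t + k + 1) = q (1 - q²) / 2`. -/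
theorem triple_sum_value (q : ℝ) (hq0 : 0 < q) (hq1 : q ≤ 1) :
    q ^ 3 * ∑' p : ℕ × ℕ × ℕ,
        (1 - q) ^ (p.1 + p.2.1 + p.2.2 + 1) / ((p.1 + p.2.1 + p.2.2 + 1 : ℕ) : ℝ) =
      q * (1 - q ^ 2) / 2 := by
  obtain ⟨x, hx⟩ : ∃ x, x = 1 - q := ⟨_, rfl⟩
  have hx0 : 0 ≤ x := by linarith
  have hx1 : x < 1 := by linarith
  have hxn : ‖x‖ < 1 := by rwa [Real.norm_of_nonneg hx0]
  rw [← hx]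
  obtain ⟨f, hf⟩ : ∃ f : ℕ → ℝ, ∀ n, f n = x ^ (n + 1) / ((n + 1 : ℕ) : ℝ) :=
    ⟨_, fun _ => rfl⟩
  have hf0 : ∀ n, 0 ≤ f n := fun n => by rw [hf]; positivity
  have hfx : ∀ n, f n ≤ x ^ n := fun n => by
    rw [hf]
    have h1 : x ^ (n + 1) ≤ x ^ n := pow_le_pow_of_le_one hx0 hx1.le (Nat.le_succ n)
    refine (div_le_self (by positivity) ?_).trans h1
    exact_mod_cast Nat.succ_le_succ (Nat.zero_le n)
  have hg := summable_geometric_of_lt_one hx0 hx1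
  have hg2 : Summable (fun p : ℕ × ℕ => x ^ p.1 * x ^ p.2) :=
    hg.mul_of_nonneg hg (fun n => by positivity) (fun n => by positivity)
  have hg3 : Summable (fun p : ℕ × ℕ × ℕ => x ^ p.1 * (x ^ p.2.1 * x ^ p.2.2)) :=
    hg.mul_of_nonneg hg2 (fun n => by positivity) (fun n => by positivity)
  have hF3 : Summable (fun p : ℕ × ℕ × ℕ => f (p.1 + p.2.1 + p.2.2)) :=
    hg3.of_nonneg_of_le (fun p => hf0 _) (fun p => (hfx _).trans_eq (by ring))
  have hd : HasSum (fun n : ℕ => ((n : ℝ) + 1) * x ^ n) (1 / (1 - x) ^ 2) := by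
    simpa using hasSum_choose_mul_geometric_of_norm_lt_one 1 hxn
  have hm2 : Summable (fun p : ℕ × ℕ => x ^ p.1 * (((p.2 : ℝ) + 1) * x ^ p.2)) :=
    hg.mul_of_nonneg hd.summable (fun n => by positivity) (fun n => by positivity)
  have hF2 : Summable (fun p : ℕ × ℕ => ((p.2 : ℝ) + 1) * f (p.1 + p.2)) := by
    refine hm2.of_nonneg_of_le (fun p => mul_nonneg (by positivity) (hf0 _)) (fun p => ?_)
    calc _ ≤ ((p.2 : ℝ) + 1) * x ^ (p.1 + p.2) :=
          mul_le_mul_of_nonneg_left (hfx _) (by positivity)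
      _ = _ := by ring
  have e1 : ∑' p : ℕ × ℕ × ℕ, f (p.1 + p.2.1 + p.2.2) =
      ∑' p : ℕ × ℕ, ((p.2 : ℝ) + 1) * f (p.1 + p.2) := by
    rw [hF3.tsum_prod, hF2.tsum_prod]
    refine tsum_congr fun s => ?_
    rw [tsum_antidiag_aux _ (hF3.prod_factor s)]
    refine tsum_congr fun m => ?_
    rw [Finset.sum_congr rfl (g := fun _ => f (s + m))]
    · simp
    · intro p hp
      rw [Finset.HasAntidiagonal.mem_antidiagonal] at hp
      simp only [add_assoc, hp]
  have hsum : ∀ n : ℕ, ∑ i ∈ Finset.range (n + 1), ((i : ℝ) + 1) = (n + 1) * (n + 2) / 2 := by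
    intro n
    induction n with
    | zero => simp
    | succ n ih => rw [Finset.sum_range_succ, ih]; push_cast; ring
  have e2 : ∑' p : ℕ × ℕ, ((p.2 : ℝ) + 1) * f (p.1 + p.2) =
      ∑' n : ℕ, (1 / 2) * (((n + 1 : ℕ) : ℝ) + 1) * x ^ (n + 1) := by
    rw [tsum_antidiag_aux _ hF2]
    refine tsum_congr fun n => ?_
    rw [Finset.sum_congr rfl (g := fun p => ((p.2 : ℝ) + 1) * f n)]
    · rw [← Finset.sum_mul, ← Finset.Nat.sum_antidiagonal_swap]
      simp only [Prod.snd_swap]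
      rw [Finset.Nat.sum_antidiagonal_eq_sum_range_succ (fun i _ => (i : ℝ) + 1), hsum, hf]
      push_cast
      field_simp
      ring
    · intro p hp
      rw [Finset.HasAntidiagonal.mem_antidiagonal] at hp
      simp only [hp]
  have e3 := hd.summable.tsum_eq_zero_add
  rw [hd.tsum_eq] at e3
  simp only [← hf]
  rw [e1, e2]
  simp only [mul_assoc]
  rw [tsum_mul_left]
  have hq : 1 - x = q := by linarith
  rw [hq] at e3
  have e4 : ∑' n : ℕ, (((n + 1 : ℕ) : ℝ) + 1) * x ^ (n + 1) = 1 / q ^ 2 - 1 := by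
    rw [e3]; simp
  rw [e4]
  field_simp
end

section
/- Let N be a finite set with |N| = n and let 𝓛 be a laminar family of subsets of N, i.e., for all L, L' ∈ 𝓛 either L ⊆ L', or L' ⊆ L, or L ∩ L' = ∅. Then there exists a bijection f : Fin n → N such that for every L ∈ 𝓛 the preimage f⁻¹(L) is an interval of consecutive indices, i.e., there exist p ≤ q with f⁻¹(L) = {m : p ≤ m ≤ q}. -/
open Classical in
theorem laminar_list {γ : Type*} (𝓛 : Set (Set γ))
    (hlam : ∀ L ∈ 𝓛, ∀ L' ∈ 𝓛, L ⊆ L' ∨ L' ⊆ L ∨ L ∩ L' = ∅) (N : Finset γ) :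
    ∃ l : List γ, l.Nodup ∧ (∀ x, x ∈ l ↔ x ∈ N) ∧ ∀ L ∈ 𝓛, ∃ a b c : List γ,
      l = a ++ b ++ c ∧ (∀ x ∈ a, x ∉ L) ∧ (∀ x ∈ b, x ∈ L) ∧ (∀ x ∈ c, x ∉ L) := by
  induction N using Finset.strongInduction with
  | H N ih =>
  set S := N.powerset.filter (fun M => M ≠ ∅ ∧ M ≠ N ∧ ∃ L ∈ 𝓛, ∀ x, x ∈ M ↔ x ∈ N ∧ x ∈ L)
    with hS
  by_cases hne : S.Nonempty
  · obtain ⟨M, hM⟩ := S.exists_max_image Finset.card hne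
    obtain ⟨hMS, hmax⟩ := hM
    have hMS' := hMS
    rw [hS, Finset.mem_filter, Finset.mem_powerset] at hMS'
    obtain ⟨hMN, hM0, hMne, L0, hL0, hML⟩ := hMS'
    obtain ⟨l1, hd1, hm1, hc1⟩ := ih M (Finset.ssubset_iff_subset_ne.2 ⟨hMN, hMne⟩)
    obtain ⟨l2, hd2, hm2, hc2⟩ := ih (N \ M)
      (Finset.sdiff_ssubset hMN (Finset.nonempty_iff_ne_empty.2 hM0))
    refine ⟨l1 ++ l2, ?_, ?_, ?_⟩
    · rw [List.nodup_append']
      refine ⟨hd1, hd2, ?_⟩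
      intro x h1 h2
      rw [hm1] at h1
      rw [hm2, Finset.mem_sdiff] at h2
      exact h2.2 h1
    · intro x
      rw [List.mem_append, hm1, hm2, Finset.mem_sdiff]
      constructor
      · rintro (h | h)
        · exact hMN h
        · exact h.1
      · intro h
        by_cases hx : x ∈ M <;> simp [hx, h]
    · intro L hL
      have left (h : ∀ x ∈ N, x ∈ L → x ∈ M) : ∃ a b c : List γ,
          l1 ++ l2 = a ++ b ++ c ∧ (∀ x ∈ a, x ∉ L) ∧ (∀ x ∈ b, x ∈ L) ∧ (∀ x ∈ c, x ∉ L) := by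
        obtain ⟨a, b, c, e, ha, hb, hc⟩ := hc1 L hL
        refine ⟨a, b, c ++ l2, by simp [e], ha, hb, ?_⟩
        intro x hx hxL
        rcases List.mem_append.1 hx with hx | hx
        · exact hc x hx hxL
        · rw [hm2, Finset.mem_sdiff] at hx
          exact hx.2 (h x hx.1 hxL)
      rcases hlam L hL L0 hL0 with h | h | h
      · exact left fun x hx hxL => (hML x).2 ⟨hx, h hxL⟩
      · by_cases hall : ∀ x ∈ N, x ∈ L
        · refine ⟨[], l1 ++ l2, [], by simp, by simp, ?_, by simp⟩
          intro x hx
          rcases List.mem_append.1 hx with hx | hx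
          · exact hall x (hMN ((hm1 x).1 hx))
          · exact hall x (Finset.mem_sdiff.1 ((hm2 x).1 hx)).1
        · have hsub : M ⊆ N.filter (· ∈ L) := by
            intro x hx
            have := (hML x).1 hx
            exact Finset.mem_filter.2 ⟨this.1, h this.2⟩
          have hin : N.filter (· ∈ L) ∈ S := by
            rw [hS, Finset.mem_filter, Finset.mem_powerset]
            refine ⟨Finset.filter_subset _ _, ?_, ?_, L, hL, by simp⟩
            · intro h0
              rw [h0] at hsub
              exact hM0 (Finset.subset_empty.1 hsub)
            · intro h0
              exact hall (Finset.filter_eq_self.1 h0)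
          have heq := Finset.eq_of_subset_of_card_le hsub (hmax _ hin)
          refine left fun x hx hxL => ?_
          rw [heq]
          exact Finset.mem_filter.2 ⟨hx, hxL⟩
      · obtain ⟨a, b, c, e, ha, hb, hc⟩ := hc2 L hL
        refine ⟨l1 ++ a, b, c, by simp [e], ?_, hb, hc⟩
        intro x hx hxL
        rcases List.mem_append.1 hx with hx | hx
        · have : x ∈ L ∩ L0 := ⟨hxL, ((hML x).1 ((hm1 x).1 hx)).2⟩
          rw [h] at this
          exact this
        · exact ha x hx hxL
  · refine ⟨N.toList, N.nodup_toList, by simp, ?_⟩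
    intro L hL
    by_cases h0 : N.filter (· ∈ L) = ∅
    · refine ⟨N.toList, [], [], by simp, ?_, by simp, by simp⟩
      intro x hx hxL
      have : x ∈ N.filter (· ∈ L) := Finset.mem_filter.2 ⟨Finset.mem_toList.1 hx, hxL⟩
      simp [h0] at this
    · refine ⟨[], N.toList, [], by simp, by simp, ?_, by simp⟩
      by_contra hcon
      apply hne
      refine ⟨N.filter (· ∈ L), ?_⟩
      rw [hS, Finset.mem_filter, Finset.mem_powerset]
      refine ⟨Finset.filter_subset _ _, h0, ?_, L, hL, by simp⟩
      intro h1
      apply hcon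
      intro x hx
      exact Finset.filter_eq_self.1 h1 x (Finset.mem_toList.1 hx)

/-- Any finite set `N` with a laminar family `𝓛` of subsets admits a numbering
`f : Fin n → N` under which every member of `𝓛` consists of consecutively numbered
elements. -/
theorem exists_consecutive_numbering {γ : Type*} (N : Finset γ) (n : ℕ) (hn : N.card = n)
    (𝓛 : Set (Set γ)) (hsub : ∀ L ∈ 𝓛, L ⊆ ↑N)
    (hlam : ∀ L ∈ 𝓛, ∀ L' ∈ 𝓛, L ⊆ L' ∨ L' ⊆ L ∨ L ∩ L' = ∅) :
    ∃ f : Fin n → γ, Function.Injective f ∧ Set.range f = ↑N ∧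
      ∀ L ∈ 𝓛, ∃ p q : ℕ, p ≤ q ∧
        f ⁻¹' L = {m : Fin n | p ≤ (m : ℕ) ∧ (m : ℕ) ≤ q} := by
  classical
  obtain ⟨l, hd, hm, hc⟩ := laminar_list 𝓛 hlam N
  have hlen : l.length = n := by
    rw [← hn, ← List.toFinset_card_of_nodup hd]
    congr 1
    ext x
    simp [hm]
  subst hlen
  refine ⟨l.get, List.nodup_iff_injective_get.1 hd, ?_, ?_⟩
  · ext x
    simp [hm]
  · intro L hL
    obtain ⟨a, b, d, e, ha, hb, hd'⟩ := hc L hL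
    have key : ∀ m : Fin l.length, l.get m ∈ L ↔
        a.length ≤ (m : ℕ) ∧ (m : ℕ) < a.length + b.length := by
      subst e
      rintro ⟨m, hm⟩
      simp only [List.length_append] at hm
      simp only [List.get_eq_getElem]
      by_cases h1 : m < a.length
      · have : (a ++ b ++ d)[m] = a[m] := by grind
        rw [this]
        have := ha a[m] (List.getElem_mem _)
        simp only [this, false_iff]
        omega
      · by_cases h2 : m < a.length + b.length
        · have : (a ++ b ++ d)[m] = b[m - a.length] := by grind
          rw [this]
          have := hb b[m - a.length] (List.getElem_mem _)
          simp only [this, true_iff]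
          omega
        · have : (a ++ b ++ d)[m] = d[m - (a.length + b.length)] := by grind
          rw [this]
          have := hd' d[m - (a.length + b.length)] (List.getElem_mem _)
          simp only [this, false_iff]
          omega
    by_cases hb0 : b.length = 0
    · refine ⟨l.length, l.length, le_rfl, ?_⟩
      ext m
      rw [Set.mem_preimage, key, Set.mem_setOf_eq]
      have := m.2
      omega
    · refine ⟨a.length, a.length + b.length - 1, by omega, ?_⟩
      ext m
      rw [Set.mem_preimage, key, Set.mem_setOf_eq]
      omega
end
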